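/- Every properly infinite positive element h of a von Neumann algebra M is Kadison–Pedersen equivalent to a projection: there exists p ∈ P(M) with h ≈ p. -/

import Mathlib

open ContinuousLinearMap Filter Topology

universe u

noncomputable section

variable {H : Type u} [NormedAddCommGroup H] [InnerProductSpace ℂ H] [CompleteSpace H]

/-- `p` is an (orthogonal) projection belonging to the von Neumann algebra `M`. -/
def IsProjIn (M : VonNeumannAlgebra H) (p : H →L[ℂ] H) : Prop :=
  p ∈ M ∧ IsSelfAdjoint p ∧ p * p = p

/-- Murray–von Neumann equivalence of `p` and `q` relative to `M`:
there is a partial isometry `v ∈ M` with `v* v = p` and `v v* = q`. -/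
def MvNEquiv (M : VonNeumannAlgebra H) (p q : H →L[ℂ] H) : Prop :=
  ∃ v ∈ M, adjoint v * v = p ∧ v * adjoint v = q

/-- The order on projections: `p ≤ q` iff `p q = p = q p`. -/
def ProjLE (p q : H →L[ℂ] H) : Prop := p * q = p ∧ q * p = p

/-- Murray–von Neumann subequivalence `p ≼ q`: `p` is equivalent to a subprojection of `q`. -/
def SubEquiv (M : VonNeumannAlgebra H) (p q : H →L[ℂ] H) : Prop :=
  ∃ r, IsProjIn M r ∧ MvNEquiv M p r ∧ ProjLE r q

/-- `z` is a central projection of `M`. -/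
def IsCentralProj (M : VonNeumannAlgebra H) (z : H →L[ℂ] H) : Prop :=
  IsProjIn M z ∧ ∀ x ∈ M, z * x = x * z

/-- A projection `p` is finite: `p ∼ q ≤ p` implies `q = p`. -/
def FiniteProj (M : VonNeumannAlgebra H) (p : H →L[ℂ] H) : Prop :=
  ∀ q, IsProjIn M q → ProjLE q p → MvNEquiv M p q → q = p

/-- A projection `p` is properly infinite: it is a countably infinite sum of pairwise
orthogonal projections, each equivalent to `p`. -/
def ProperlyInfiniteProj (M : VonNeumannAlgebra H) (p : H →L[ℂ] H) : Prop :=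
  p ≠ 0 ∧ ∃ e : ℕ → H →L[ℂ] H, (∀ n, IsProjIn M (e n)) ∧
    (Pairwise fun m n => e m * e n = 0) ∧ (∀ n, MvNEquiv M (e n) p) ∧
    ∀ ξ : H, HasSum (fun n => e n ξ) (p ξ)

/-- `z` is the central support of `h`: the smallest central projection with `z h = h`. -/
def IsCentralSupport (M : VonNeumannAlgebra H) (h z : H →L[ℂ] H) : Prop :=
  IsCentralProj M z ∧ z * h = h ∧ ∀ w, IsCentralProj M w → w * h = h → z * w = z

/-- The projection `e` is σ-finite relative to `M`: every family of pairwise orthogonal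
nonzero subprojections of `e` in `M` is countable. -/
def SigmaFiniteProj (M : VonNeumannAlgebra H) (e : H →L[ℂ] H) : Prop :=
  ∀ S : Set (H →L[ℂ] H), (∀ q ∈ S, IsProjIn M q ∧ q ≠ 0 ∧ ProjLE q e) →
    (S.Pairwise fun a b => a * b = 0) → S.Countable

/-- Kadison–Pedersen equivalence on the positive cone: `h ≈ k` iff there is a family
`{x_α} ⊆ M` with `h = Σ x_α* x_α` and `k = Σ x_α x_α*` (sums in the strong topology). -/
def KPEquiv (M : VonNeumannAlgebra H) (h k : H →L[ℂ] H) : Prop :=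
  ∃ (ι : Type u) (x : ι → H →L[ℂ] H), (∀ i, x i ∈ M) ∧
    (∀ ξ : H, HasSum (fun i => (adjoint (x i) * x i) ξ) (h ξ)) ∧
    (∀ ξ : H, HasSum (fun i => (x i * adjoint (x i)) ξ) (k ξ))

/-- Operator order: `a ≤ b` iff `b - a` is positive. -/
def OpLE (a b : H →L[ℂ] H) : Prop := (b - a).IsPositive

/-- `h ∈ M₊` is finite in the Kadison–Pedersen sense: `h ≈ k ≤ h` implies `k = h`. -/
def KPFinite (M : VonNeumannAlgebra H) (h : H →L[ℂ] H) : Prop :=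
  ∀ k, k ∈ M → k.IsPositive → OpLE k h → KPEquiv M h k → k = h

/-- `h ∈ M₊` is properly infinite: `z h` is finite and nonzero for no central projection `z`. -/
def KPProperlyInfinite (M : VonNeumannAlgebra H) (h : H →L[ℂ] H) : Prop :=
  h ≠ 0 ∧ ∀ z, IsCentralProj M z → KPFinite M (z * h) → z * h = 0

/-- The set of projections of `M`. -/
def ProjSet (M : VonNeumannAlgebra H) := {p : H →L[ℂ] H // IsProjIn M p}

/-- The strong operator topology on the projections of `M` (topology of pointwise convergence). -/
instance (M : VonNeumannAlgebra H) : TopologicalSpace (ProjSet M) :=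
  TopologicalSpace.induced (fun p : ProjSet M => (fun ξ => p.1 ξ : H → H)) inferInstance

/-- The quotient `P(M)/∼` of the projections of `M` by Murray–von Neumann equivalence,
carrying the quotient (strong operator) topology. -/
abbrev PQuot (M : VonNeumannAlgebra H) :=
  Quot (fun p q : ProjSet M => MvNEquiv M p.1 q.1)

/-- The quotient map `P(M) → P(M)/∼`. -/
def pquotMk (M : VonNeumannAlgebra H) : ProjSet M → PQuot M := Quot.mk _

/-- The strong operator topology on `B(H)`. -/
def SOT : TopologicalSpace (H →L[ℂ] H) :=
  TopologicalSpace.induced (fun a : H →L[ℂ] H => (fun ξ => a ξ : H → H)) inferInstance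

/-- The order induced on `P(M)/∼` by Murray–von Neumann subequivalence. -/
def QLE (M : VonNeumannAlgebra H) (a b : PQuot M) : Prop :=
  ∃ p q : ProjSet M, a = pquotMk M p ∧ b = pquotMk M q ∧ SubEquiv M p.1 q.1

/-!
A self-absorbing `h`, meaning `h ≈ h + h`, contains countably many copies of itself. After
rescaling to `h ≤ 1`, the projection `p = ∑ h (1 - h)ⁿ` onto the closure of the range of `h`
satisfies `h ≤ p`, while its terms lie below `h`, so packing them into the copies gives `p ≼ h`;
a Schröder–Bernstein argument yields `h ≈ p`. To see that a properly infinite `h` is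
self-absorbing, take a maximal self-absorbing `k ≤ h` and compare `k` with `h - k`. On the central
part where `k` is dominated it must vanish by maximality, and there `h` is finite, because an
equivalence of `h` with a proper part of itself would again produce infinitely many copies. So
that part of `h` is zero, whence `h - k ≼ k` and `h ≼ k + k ≈ k`.
-/

section CStarAlgebra

variable {A : Type*} [CStarAlgebra A] [PartialOrder A] [StarOrderedRing A] {a b : A}

lemma star_sqrt_mul_sqrt (ha : 0 ≤ a) : star (CFC.sqrt a) * CFC.sqrt a = a := by
  rw [(CFC.sqrt_nonneg a).isSelfAdjoint.star_eq, CFC.sqrt_mul_sqrt_self a ha]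

lemma sqrt_mul_star_sqrt (ha : 0 ≤ a) : CFC.sqrt a * star (CFC.sqrt a) = a := by
  rw [(CFC.sqrt_nonneg a).isSelfAdjoint.star_eq, CFC.sqrt_mul_sqrt_self a ha]

lemma mul_self_le_norm_smul (ha : 0 ≤ a) : a * a ≤ ‖a‖ • a := by
  calc a * a = star (CFC.sqrt a) * (CFC.sqrt a * star (CFC.sqrt a)) * CFC.sqrt a := by
        simp only [mul_assoc, star_sqrt_mul_sqrt ha]
        rw [← mul_assoc, star_sqrt_mul_sqrt ha]
    _ ≤ ‖CFC.sqrt a * star (CFC.sqrt a)‖ • (star (CFC.sqrt a) * CFC.sqrt a) :=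
        CStarAlgebra.star_left_conjugate_le_norm_smul
    _ = ‖a‖ • a := by rw [sqrt_mul_star_sqrt ha, star_sqrt_mul_sqrt ha]

lemma star_mul_self_mul_le (ha : 0 ≤ a) (w : A) :
    star (w * a) * (w * a) ≤ (‖star w * w‖ * ‖a‖) • a := by
  calc star (w * a) * (w * a) = star a * (star w * w) * a := by simp only [star_mul, mul_assoc]
    _ ≤ ‖star w * w‖ • (star a * a) := CStarAlgebra.star_left_conjugate_le_norm_smul
    _ ≤ ‖star w * w‖ • ‖a‖ • a := by
      rw [ha.isSelfAdjoint.star_eq]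
      exact smul_le_smul_of_nonneg_left (mul_self_le_norm_smul ha) (norm_nonneg _)
    _ = (‖star w * w‖ * ‖a‖) • a := smul_smul _ _ _

lemma exists_smul_star_mul_self_le {x : A} {r s : ℝ} (ha : 0 ≤ a) (hb : 0 ≤ b)
    (hxa : star x * x ≤ r • a) (hxb : x * star x ≤ s • b) :
    ∃ c : ℝ, c ≠ 0 ∧ star (c • x) * (c • x) ≤ a ∧ (c • x) * star (c • x) ≤ b := by
  obtain ⟨N, hN, hrN, hsN⟩ : ∃ N : ℝ, 0 < N ∧ r ≤ N ∧ s ≤ N :=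
    ⟨max 1 (max r s), by simp, by simp, by simp⟩
  have hscale {t : ℝ} {d e : A} (hd : 0 ≤ d) (ht : t ≤ N) (he : e ≤ t • d) : N⁻¹ • e ≤ d :=
    (inv_smul_le_iff_of_pos hN).2 (he.trans (smul_le_smul_of_nonneg_right ht hd))
  have hsqrt : √N⁻¹ * √N⁻¹ = N⁻¹ := Real.mul_self_sqrt (inv_nonneg.2 hN.le)
  refine ⟨√N⁻¹, by positivity, ?_, ?_⟩
  · rw [star_smul, star_trivial, smul_mul_smul_comm, hsqrt]
    exact hscale ha hrN hxa
  · rw [star_smul, star_trivial, smul_mul_smul_comm, hsqrt]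
    exact hscale hb hsN hxb

lemma mul_one_sub_pow_nonneg (ha : 0 ≤ a) (ha₁ : a ≤ 1) (n : ℕ) : 0 ≤ a * (1 - a) ^ n :=
  (((Commute.one_right a).sub_right (.refl a)).pow_right n).mul_nonneg ha
    (CStarAlgebra.pow_nonneg (sub_nonneg.2 ha₁) n)

lemma mul_one_sub_pow_le (ha : 0 ≤ a) (ha₁ : a ≤ 1) (n : ℕ) : a * (1 - a) ^ n ≤ a := by
  have hpow : (1 - a) ^ n ≤ 1 := by
    simpa using CStarAlgebra.pow_antitone (sub_nonneg.2 ha₁) (sub_le_self 1 ha) n.zero_le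
  have hcomm : Commute a (1 - (1 - a) ^ n) :=
    (Commute.one_right a).sub_right (((Commute.one_right a).sub_right (.refl a)).pow_right n)
  simpa [mul_sub] using hcomm.mul_nonneg ha (sub_nonneg.2 hpow)

lemma sum_range_mul_one_sub_pow {R : Type*} [Ring R] (a : R) (N : ℕ) :
    ∑ n ∈ Finset.range N, a * (1 - a) ^ n = 1 - (1 - a) ^ N := by
  rw [← Finset.mul_sum, ← mul_neg_geom_sum (1 - a) N, sub_sub_cancel]

lemma sum_mul_one_sub_pow_le_one (ha : 0 ≤ a) (ha₁ : a ≤ 1) (F : Finset ℕ) :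
    ∑ n ∈ F, a * (1 - a) ^ n ≤ 1 := by
  calc ∑ n ∈ F, a * (1 - a) ^ n ≤ ∑ n ∈ Finset.range (F.sup id + 1), a * (1 - a) ^ n :=
        Finset.sum_le_sum_of_subset_of_nonneg F.subset_range_sup_succ fun n _ _ =>
          mul_one_sub_pow_nonneg ha ha₁ n
    _ = 1 - (1 - a) ^ (F.sup id + 1) := sum_range_mul_one_sub_pow a _
    _ ≤ 1 := sub_le_self 1 (CStarAlgebra.pow_nonneg (sub_nonneg.2 ha₁) _)

lemma inv_smul_le_one_of_norm_le (ha : IsSelfAdjoint a) {r : ℝ} (hr : 0 < r) (har : ‖a‖ ≤ r) :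
    r⁻¹ • a ≤ 1 := by
  rw [inv_smul_le_iff_of_pos hr]
  calc a ≤ algebraMap ℝ A ‖a‖ := ha.le_algebraMap_norm_self
    _ = ‖a‖ • 1 := Algebra.algebraMap_eq_smul_one _
    _ ≤ r • 1 := smul_le_smul_of_nonneg_right har zero_le_one

end CStarAlgebra

section StrongSums

open scoped ComplexOrder

variable {E : Type*} [NormedAddCommGroup E] [InnerProductSpace ℂ E]

lemma nonneg_iff_inner_apply_self_nonneg {a : E →L[ℂ] E} :
    0 ≤ a ↔ ∀ ξ, 0 ≤ inner ℂ (a ξ) ξ := by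
  rw [nonneg_iff_isPositive]
  refine ⟨fun h => h.inner_nonneg_left, fun h => (isPositive_iff_complex a).2 fun ξ => ?_⟩
  obtain ⟨hre, him⟩ := RCLike.nonneg_iff.1 (h ξ)
  exact ⟨RCLike.ext (by simp) (by simpa using him.symm), hre⟩

lemma le_of_tendsto_apply {α : Type*} {l : Filter α} [l.NeBot] {a b : α → E →L[ℂ] E}
    {h k : E →L[ℂ] E} (ha : ∀ ξ, Tendsto (fun n => a n ξ) l (𝓝 (h ξ)))
    (hb : ∀ ξ, Tendsto (fun n => b n ξ) l (𝓝 (k ξ))) (hab : ∀ᶠ n in l, a n ≤ b n) : h ≤ k := by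
  refine (le_def h k).2 ((nonneg_iff_isPositive _).1 <|
    nonneg_iff_inner_apply_self_nonneg.2 fun ξ => ?_)
  refine ge_of_tendsto (((hb ξ).sub (ha ξ)).inner tendsto_const_nhds) (hab.mono fun n hn => ?_)
  exact ((le_def _ _).1 hn).inner_nonneg_left ξ

lemma reApplyInnerSelf_mono {a b : E →L[ℂ] E} (hab : a ≤ b) (ξ : E) :
    a.reApplyInnerSelf ξ ≤ b.reApplyInnerSelf ξ := by
  simpa [reApplyInnerSelf_apply, inner_sub_left] using (isPositive_def.1 hab).2 ξ

lemma reApplyInnerSelf_sum {ι : Type*} (F : Finset ι) (a : ι → E →L[ℂ] E) (ξ : E) :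
    (∑ i ∈ F, a i).reApplyInnerSelf ξ = ∑ i ∈ F, (a i).reApplyInnerSelf ξ := by
  simp [reApplyInnerSelf_apply, sum_inner]

/-- Summability of a family of operators in the strong operator topology, the mode of convergence
in Kadison–Pedersen equivalence. -/
def HasStrongSum {ι : Type*} (a : ι → E →L[ℂ] E) (h : E →L[ℂ] E) : Prop :=
  ∀ ξ, HasSum (fun i => a i ξ) (h ξ)

variable {ι κ : Type*} {a b : ι → E →L[ℂ] E} {h k : E →L[ℂ] E}

lemma hasStrongSum_fintype [Fintype ι] (a : ι → E →L[ℂ] E) : HasStrongSum a (∑ i, a i) :=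
  fun ξ => by simpa using hasSum_fintype fun i => a i ξ

lemma hasStrongSum_pair (h k : E →L[ℂ] E) : HasStrongSum ![h, k] (h + k) := by
  simpa using hasStrongSum_fintype ![h, k]

namespace HasStrongSum

lemma tendsto_sum_apply (ha : HasStrongSum a h) (ξ : E) :
    Tendsto (fun F : Finset ι => (∑ i ∈ F, a i) ξ) atTop (𝓝 (h ξ)) := by
  simpa using! ha ξ

lemma unique (hh : HasStrongSum a h) (hk : HasStrongSum a k) : h = k :=
  ContinuousLinearMap.ext fun ξ => (hh ξ).unique (hk ξ)

lemma add (ha : HasStrongSum a h) (hb : HasStrongSum b k) :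
    HasStrongSum (fun i => a i + b i) (h + k) :=
  fun ξ => (ha ξ).add (hb ξ)

lemma mul_left (c : E →L[ℂ] E) (ha : HasStrongSum a h) : HasStrongSum (fun i => c * a i) (c * h) :=
  fun ξ => (ha ξ).mapL c

lemma mul_right (ha : HasStrongSum a h) (c : E →L[ℂ] E) : HasStrongSum (fun i => a i * c) (h * c) :=
  fun ξ => ha (c ξ)

lemma comp_equiv (ha : HasStrongSum a h) (e : κ ≃ ι) : HasStrongSum (a ∘ e) h :=
  fun ξ => e.hasSum_iff.2 (ha ξ)

lemma sum_elim {b : κ → E →L[ℂ] E} (ha : HasStrongSum a h) (hb : HasStrongSum b k) :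
    HasStrongSum (Sum.elim a b) (h + k) :=
  fun ξ => HasSum.sum (f := fun i => Sum.elim a b i ξ) (ha ξ) (hb ξ)

lemma nat_cons {f : ℕ → E →L[ℂ] E} (hf : HasStrongSum f h) (s : E →L[ℂ] E) :
    HasStrongSum (fun n => Nat.casesOn n s f) (s + h) := fun ξ => by
  rw [← hasSum_nat_add_iff' 1]
  simpa using hf ξ

lemma le_of_sum_le (ha : HasStrongSum a h) (hle : ∀ F : Finset ι, ∑ i ∈ F, a i ≤ k) : h ≤ k :=
  le_of_tendsto_apply ha.tendsto_sum_apply (fun _ => tendsto_const_nhds) (.of_forall hle)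

end HasStrongSum

lemma norm_apply_sq_le {a : H →L[ℂ] H} (ha : 0 ≤ a) (ξ : H) :
    ‖a ξ‖ ^ 2 ≤ ‖a‖ * a.reApplyInnerSelf ξ := by
  have hsq : (a * a).reApplyInnerSelf ξ = ‖a ξ‖ ^ 2 := by
    rw [apply_norm_sq_eq_inner_adjoint_left, ← star_eq_adjoint, ha.isSelfAdjoint.star_eq]
    rfl
  calc ‖a ξ‖ ^ 2 ≤ (‖a‖ • a).reApplyInnerSelf ξ :=
        hsq ▸ reApplyInnerSelf_mono (mul_self_le_norm_smul ha) ξ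
    _ = ‖a‖ * a.reApplyInnerSelf ξ := by
        simp [reApplyInnerSelf_apply, inner_smul_left_eq_smul]

variable {a : ι → H →L[ℂ] H} {h : H →L[ℂ] H}

namespace HasStrongSum

lemma sum_le (ha : HasStrongSum a h) (hpos : ∀ i, 0 ≤ a i) (F : Finset ι) : ∑ i ∈ F, a i ≤ h :=
  le_of_tendsto_apply (fun _ => tendsto_const_nhds) ha.tendsto_sum_apply <|
    (eventually_ge_atTop F).mono fun _ hG => Finset.sum_le_sum_of_subset_of_nonneg hG
      fun i _ _ => hpos i

lemma le (ha : HasStrongSum a h) (hpos : ∀ i, 0 ≤ a i) (i : ι) : a i ≤ h := by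
  simpa using ha.sum_le hpos {i}

lemma nonneg (ha : HasStrongSum a h) (hpos : ∀ i, 0 ≤ a i) : 0 ≤ h := by
  simpa using ha.sum_le hpos ∅

end HasStrongSum

lemma summable_apply_of_sum_le (hpos : ∀ i, 0 ≤ a i) (hle : ∀ F : Finset ι, ∑ i ∈ F, a i ≤ h)
    (ξ : H) : Summable fun i => a i ξ := by
  have hsum_nonneg (F : Finset ι) : 0 ≤ ∑ i ∈ F, a i := Finset.sum_nonneg fun i _ => hpos i
  have hform_nonneg (F : Finset ι) : 0 ≤ (∑ i ∈ F, a i).reApplyInnerSelf ξ :=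
    (isPositive_def.1 ((nonneg_iff_isPositive _).1 (hsum_nonneg F))).2 ξ
  have hform : Summable fun i => (a i).reApplyInnerSelf ξ :=
    summable_of_sum_le (fun i => by simpa using hform_nonneg {i}) fun F =>
      (reApplyInnerSelf_sum F a ξ).symm.trans_le (reApplyInnerSelf_mono (hle F) ξ)
  have hbound (F : Finset ι) :
      ‖∑ i ∈ F, a i ξ‖ ^ 2 ≤ (‖h‖ + 1) * ‖∑ i ∈ F, (a i).reApplyInnerSelf ξ‖ := by
    have hnorm : ‖∑ i ∈ F, a i‖ ≤ ‖h‖ + 1 :=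
      (CStarAlgebra.norm_le_norm_of_nonneg_of_le (hsum_nonneg F) (hle F)).trans (by simp)
    rw [← reApplyInnerSelf_sum, Real.norm_of_nonneg (hform_nonneg F), ← sum_apply]
    exact (norm_apply_sq_le (hsum_nonneg F) ξ).trans
      (mul_le_mul_of_nonneg_right hnorm (hform_nonneg F))
  refine summable_iff_vanishing_norm.2 fun ε hε => ?_
  obtain ⟨s, hs⟩ := summable_iff_vanishing_norm.1 hform (ε ^ 2 / (‖h‖ + 1)) (by positivity)
  refine ⟨s, fun t ht => lt_of_pow_lt_pow_left₀ 2 hε.le ((hbound t).trans_lt ?_)⟩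
  rw [← lt_div_iff₀' (by positivity)]
  exact hs t ht

theorem exists_hasStrongSum_of_sum_le (hpos : ∀ i, 0 ≤ a i)
    (hle : ∀ F : Finset ι, ∑ i ∈ F, a i ≤ h) : ∃ b ≤ h, HasStrongSum a b := by
  have hsum := summable_apply_of_sum_le hpos hle
  let L : H →ₗ[ℂ] H :=
    { toFun := fun ξ => ∑' i, a i ξ
      map_add' := fun ξ η => by simpa using (hsum ξ).tsum_add (hsum η)
      map_smul' := fun z ξ => by simpa using (hsum ξ).tsum_const_smul z }
  have hL (ξ : H) : ‖L ξ‖ ≤ ‖h‖ * ‖ξ‖ := by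
    refine le_of_tendsto (hsum ξ).hasSum.norm (.of_forall fun F => ?_)
    have hF : ‖∑ i ∈ F, a i‖ ≤ ‖h‖ := CStarAlgebra.norm_le_norm_of_nonneg_of_le
      (Finset.sum_nonneg fun i _ => hpos i) (hle F)
    rw [← sum_apply]
    exact ContinuousLinearMap.le_of_opNorm_le _ hF ξ
  have hb : HasStrongSum a (L.mkContinuous ‖h‖ hL) := fun ξ => (hsum ξ).hasSum
  exact ⟨_, hb.le_of_sum_le hle, hb⟩

namespace HasStrongSum

lemma sigma {κ : ι → Type*} {d : (i : ι) → κ i → H →L[ℂ] H} (hpos : ∀ i j, 0 ≤ d i j)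
    (hd : ∀ i, HasStrongSum (d i) (a i)) (ha : HasStrongSum a h) :
    HasStrongSum (fun p : Σ i, κ i => d p.1 p.2) h := by
  classical
  have hle (F : Finset (Σ i, κ i)) : ∑ p ∈ F, d p.1 p.2 ≤ h := calc
    ∑ p ∈ F, d p.1 p.2 = ∑ i ∈ F.image Sigma.fst, ∑ j ∈ F.preimage (Sigma.mk i)
        sigma_mk_injective.injOn, d i j := by
      rw [Finset.sum_sigma']
      exact Finset.sum_congr (by ext x; simpa using fun hx => ⟨_, hx⟩) fun _ _ => rfl
    _ ≤ ∑ i ∈ F.image Sigma.fst, a i := Finset.sum_le_sum fun i _ => (hd i).sum_le (hpos i) _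
    _ ≤ h := ha.sum_le (fun i => (hd i).nonneg (hpos i)) _
  obtain ⟨b, -, hb⟩ := exists_hasStrongSum_of_sum_le (fun p : Σ i, κ i => hpos p.1 p.2) hle
  have hba : HasStrongSum a b := fun ξ => (hb ξ).sigma fun i => hd i ξ
  exact ha.unique hba ▸ hb

lemma prod {d : ι → κ → H →L[ℂ] H} (hpos : ∀ i j, 0 ≤ d i j)
    (hd : ∀ i, HasStrongSum (d i) (a i)) (ha : HasStrongSum a h) :
    HasStrongSum (fun p : ι × κ => d p.1 p.2) h :=
  (sigma hpos hd ha).comp_equiv (Equiv.sigmaEquivProd ι κ).symm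

lemma prod_swap {d : ι → κ → H →L[ℂ] H} (hpos : ∀ i j, 0 ≤ d i j) {b : κ → H →L[ℂ] H}
    (hd : ∀ j, HasStrongSum (fun i => d i j) (b j)) (hb : HasStrongSum b h) :
    HasStrongSum (fun p : ι × κ => d p.1 p.2) h :=
  (prod (fun j i => hpos i j) hd hb).comp_equiv (Equiv.prodComm ι κ)

lemma comm {d : ι → κ → H →L[ℂ] H} (hpos : ∀ i j, 0 ≤ d i j) {b : κ → H →L[ℂ] H}
    (hrow : ∀ i, HasStrongSum (d i) (a i)) (hcol : ∀ j, HasStrongSum (fun i => d i j) (b j))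
    (hb : HasStrongSum b h) : HasStrongSum a h :=
  fun ξ => (prod_swap hpos hcol hb ξ).prod_fiberwise fun i => hrow i ξ

end HasStrongSum

end StrongSums

section Factorization

variable {𝕜 E F G : Type*} [RCLike 𝕜] [NormedAddCommGroup E] [InnerProductSpace 𝕜 E]
  [CompleteSpace E] [NormedAddCommGroup F] [InnerProductSpace 𝕜 F] [CompleteSpace F]
  [NormedAddCommGroup G] [NormedSpace 𝕜 G]

theorem exists_comp_eq_of_norm_le [CompleteSpace G] {A : E →L[𝕜] G} {B : E →L[𝕜] F}
    (hAB : ∀ ξ, ‖A ξ‖ ≤ ‖B ξ‖) : ∃ C : F →L[𝕜] G, C ∘L B = A ∧ ∀ η, adjoint B η = 0 → C η = 0 := by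
  let K := B.range.topologicalClosure
  have hBK (ξ : E) : B ξ ∈ K := B.range.le_topologicalClosure ⟨ξ, rfl⟩
  let B₀ : E →ₗ[𝕜] K := B.toLinearMap.codRestrict K hBK
  have hdense : DenseRange B₀ := fun η => by
    rw [closure_subtype, ← Set.range_comp]
    exact η.2
  have hnorm : ∃ c, ∀ ξ, ‖A ξ‖ ≤ c * ‖B₀ ξ‖ := ⟨1, fun ξ => (hAB ξ).trans_eq (one_mul _).symm⟩
  refine ⟨A.toLinearMap.extendOfNorm B₀ ∘L K.orthogonalProjectionOnto,
    ContinuousLinearMap.ext fun ξ => ?_, fun η hη => ?_⟩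
  · have hproj : K.orthogonalProjectionOnto (B ξ) = B₀ ξ :=
      Submodule.orthogonalProjectionOnto_mem_subspace_eq_self (B₀ ξ)
    simpa [hproj] using LinearMap.extendOfNorm_eq (f := A.toLinearMap) hdense hnorm ξ
  · have hη' : η ∈ Kᗮ := by
      rw [Submodule.orthogonal_closure, orthogonal_range]
      exact hη
    simp [Submodule.orthogonalProjectionOnto_apply_of_mem_orthogonal hη']

lemma eq_zero_of_comp_eq_zero {B : E →L[𝕜] F} {D : F →L[𝕜] G} (hDB : D ∘L B = 0)
    (hD : ∀ η, adjoint B η = 0 → D η = 0) : D = 0 := by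
  have hrange : B.range ≤ D.ker := by
    rintro _ ⟨ξ, rfl⟩
    exact DFunLike.congr_fun hDB ξ
  have hperp : D.kerᗮ ≤ D.ker := fun η hη =>
    hD η ((orthogonal_range B).le (Submodule.orthogonal_le hrange hη))
  have : CompleteSpace D.ker := D.isClosed_ker.completeSpace_coe
  have hker : D.ker = ⊤ := by
    rw [← Submodule.orthogonal_eq_bot_iff, ← le_bot_iff, ← D.ker.inf_orthogonal_eq_bot]
    exact le_inf hperp le_rfl
  exact ContinuousLinearMap.ext fun η => (hker.ge : ⊤ ≤ D.ker) (Submodule.mem_top (x := η))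

end Factorization

section VonNeumannAlgebra

variable {M : VonNeumannAlgebra H}

lemma mem_iff_forall_commutant {x : H →L[ℂ] H} :
    x ∈ M ↔ ∀ T ∈ M.commutant, T * x = x * T := by
  conv_lhs => rw [← M.commutant_commutant]
  exact VonNeumannAlgebra.mem_commutant_iff

lemma sqrt_mem {a : H →L[ℂ] H} (ha : a ∈ M) : CFC.sqrt a ∈ M :=
  mem_iff_forall_commutant.2 fun _ hT =>
    (Commute.cfcₙ_nnreal (mem_iff_forall_commutant.1 ha _ hT).symm NNReal.sqrt).eq.symm

lemma HasStrongSum.mem {ι : Type*} {a : ι → H →L[ℂ] H} {h : H →L[ℂ] H} (hsum : HasStrongSum a h)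
    (ha : ∀ i, a i ∈ M) : h ∈ M :=
  mem_iff_forall_commutant.2 fun T hT => (hsum.mul_left T).unique <| by
    simpa only [mem_iff_forall_commutant.1 (ha _) T hT] using hsum.mul_right T

lemma norm_apply_le_of_star_mul_self_le {A B : H →L[ℂ] H} (hAB : star A * A ≤ star B * B) (ξ : H) :
    ‖A ξ‖ ≤ ‖B ξ‖ := by
  refine le_of_sq_le_sq ?_ (norm_nonneg _)
  rw [apply_norm_sq_eq_inner_adjoint_left, apply_norm_sq_eq_inner_adjoint_left]
  exact reApplyInnerSelf_mono hAB ξ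

theorem exists_mem_mul_eq_of_star_mul_self_le {A B : H →L[ℂ] H} (hA : A ∈ M) (hB : B ∈ M)
    (hAB : star A * A ≤ star B * B) : ∃ C ∈ M, C * B = A := by
  obtain ⟨C, hCB, hC⟩ := exists_comp_eq_of_norm_le (norm_apply_le_of_star_mul_self_le hAB)
  refine ⟨C, mem_iff_forall_commutant.2 fun T hT => sub_eq_zero.1 ?_, hCB⟩
  refine eq_zero_of_comp_eq_zero (B := B) ?_ fun η hη => ?_
  · calc (T * C - C * T) * B = T * (C * B) - C * (T * B) := by simp only [sub_mul, mul_assoc]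
      _ = T * (C * B) - C * B * T := by rw [mem_iff_forall_commutant.1 hB T hT, mul_assoc]
      _ = 0 := by rw [mul_def C B, hCB, mem_iff_forall_commutant.1 hA T hT, sub_self]
  · have hTη : adjoint B (T η) = 0 := by
      have hcomm := DFunLike.congr_fun (mem_iff_forall_commutant.1 (star_mem hB) T hT) η
      simpa [star_eq_adjoint, hη] using hcomm.symm
    simp [hC η hη, hC (T η) hTη]

end VonNeumannAlgebra

section KadisonPedersenEquivalence

/-- `h` lies in the positive cone `M₊` of `M`, the domain of Kadison–Pedersen equivalence.
Positivity is expressed through the Loewner order rather than by `IsPositive`. -/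
structure IsPosIn (M : VonNeumannAlgebra H) (h : H →L[ℂ] H) : Prop where
  mem : h ∈ M
  nonneg : 0 ≤ h

variable {M : VonNeumannAlgebra H} {a b c d h k l s x : H →L[ℂ] H}

namespace IsPosIn

lemma add (ha : IsPosIn M a) (hb : IsPosIn M b) : IsPosIn M (a + b) :=
  ⟨add_mem ha.mem hb.mem, add_nonneg ha.nonneg hb.nonneg⟩

lemma sub (ha : IsPosIn M a) (hb : IsPosIn M b) (hba : b ≤ a) : IsPosIn M (a - b) :=
  ⟨sub_mem ha.mem hb.mem, sub_nonneg.2 hba⟩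

lemma star_mul_self (hx : x ∈ M) : IsPosIn M (star x * x) :=
  ⟨mul_mem (star_mem hx) hx, star_mul_self_nonneg x⟩

end IsPosIn

lemma HasStrongSum.isPosIn {ι : Type*} {a : ι → H →L[ℂ] H} (hsum : HasStrongSum a h)
    (ha : ∀ i, IsPosIn M (a i)) : IsPosIn M h :=
  ⟨hsum.mem fun i => (ha i).mem, hsum.nonneg fun i => (ha i).nonneg⟩

theorem exists_refinement {ι κ : Type*} {y : ι → H →L[ℂ] H} {x : κ → H →L[ℂ] H}
    (hy : ∀ i, y i ∈ M) (hx : ∀ j, x j ∈ M)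
    (hyh : HasStrongSum (fun i => star (y i) * y i) h)
    (hxh : HasStrongSum (fun j => star (x j) * x j) h) :
    ∃ w : ι → κ → H →L[ℂ] H, (∀ i j, w i j ∈ M) ∧
      (∀ i, HasStrongSum (fun j => w i j * star (w i j)) (y i * star (y i))) ∧
      ∀ j, HasStrongSum (fun i => star (w i j) * w i j) (x j * star (x j)) := by
  obtain ⟨hhM, hh⟩ := hyh.isPosIn fun i => IsPosIn.star_mul_self (hy i)
  set r := CFC.sqrt h
  have hr : star r = r := (CFC.sqrt_nonneg h).isSelfAdjoint.star_eq
  have hrr : r * r = h := CFC.sqrt_mul_sqrt_self h hh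
  have hfactor {z : H →L[ℂ] H} (hz : z ∈ M) (hzh : star z * z ≤ h) : ∃ c ∈ M, c * r = z :=
    exists_mem_mul_eq_of_star_mul_self_le hz (sqrt_mem hhM) (by rwa [hr, hrr])
  have hconj {c z : H →L[ℂ] H} (hcz : c * r = z) : c * h * star c = z * star z := by
    rw [← hcz, star_mul, hr, ← hrr]
    simp only [mul_assoc]
  choose c _ hcy using fun i => hfactor (hy i) (hyh.le (fun i => star_mul_self_nonneg (y i)) i)
  choose d hd hdx using fun j => hfactor (hx j) (hxh.le (fun j => star_mul_self_nonneg (x j)) j)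
  have hyd (i : ι) (j : κ) : y i * star (d j) = c i * star (x j) := by
    rw [← hcy i, ← hdx j, star_mul, hr, mul_assoc]
  have hmul_star (i : ι) (j : κ) : y i * star (d j) * star (y i * star (d j)) =
      c i * (star (x j) * x j) * star (c i) := by
    rw [hyd, star_mul, star_star]
    simp only [mul_assoc]
  have hstar_mul (i : ι) (j : κ) : star (y i * star (d j)) * (y i * star (d j)) =
      d j * (star (y i) * y i) * star (d j) := by
    rw [star_mul, star_star]
    simp only [mul_assoc]
  refine ⟨fun i j => y i * star (d j), fun i j => mul_mem (hy i) (star_mem (hd j)), fun i => ?_,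
    fun j => ?_⟩
  · simpa only [hmul_star, hconj (hcy i)] using (hxh.mul_left (c i)).mul_right (star (c i))
  · simpa only [hstar_mul, hconj (hdx j)] using (hyh.mul_left (d j)).mul_right (star (d j))

lemma kpEquiv_iff : KPEquiv M h k ↔ ∃ (ι : Type u) (x : ι → H →L[ℂ] H), (∀ i, x i ∈ M) ∧
    HasStrongSum (fun i => star (x i) * x i) h ∧ HasStrongSum (fun i => x i * star (x i)) k :=
  Iff.rfl

namespace KPEquiv

lemma of_small {ι : Type*} [Small.{u} ι] {x : ι → H →L[ℂ] H} (hx : ∀ i, x i ∈ M)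
    (hh : HasStrongSum (fun i => star (x i) * x i) h)
    (hk : HasStrongSum (fun i => x i * star (x i)) k) : KPEquiv M h k :=
  kpEquiv_iff.2 ⟨Shrink.{u} ι, x ∘ (equivShrink ι).symm, fun _ => hx _,
    hh.comp_equiv (equivShrink ι).symm, hk.comp_equiv (equivShrink ι).symm⟩

lemma symm (e : KPEquiv M h k) : KPEquiv M k h := by
  obtain ⟨ι, x, hx, hxh, hxk⟩ := kpEquiv_iff.1 e
  exact of_small (fun i => star_mem (hx i)) (by simpa only [star_star] using hxk)
    (by simpa only [star_star] using hxh)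

lemma isPosIn_left (e : KPEquiv M h k) : IsPosIn M h := by
  obtain ⟨ι, x, hx, hxh, -⟩ := kpEquiv_iff.1 e
  exact hxh.isPosIn fun i => IsPosIn.star_mul_self (hx i)

lemma isPosIn_right (e : KPEquiv M h k) : IsPosIn M k :=
  e.symm.isPosIn_left

lemma star_mul_self (hx : x ∈ M) : KPEquiv M (star x * x) (x * star x) :=
  of_small (fun _ : Unit => hx) (by simpa using hasStrongSum_fintype fun _ : Unit => star x * x)
    (by simpa using hasStrongSum_fintype fun _ : Unit => x * star x)

lemma refl (hh : IsPosIn M h) : KPEquiv M h h := by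
  simpa only [star_sqrt_mul_sqrt hh.nonneg, sqrt_mul_star_sqrt hh.nonneg]
    using star_mul_self (sqrt_mem hh.mem)

theorem trans (e : KPEquiv M h k) (f : KPEquiv M k l) : KPEquiv M h l := by
  obtain ⟨κ, x, hx, hxh, hxk⟩ := kpEquiv_iff.1 e
  obtain ⟨ι, y, hy, hyk, hyl⟩ := kpEquiv_iff.1 f
  obtain ⟨w, hw, hwy, hwx⟩ := exists_refinement (x := fun j => star (x j)) hy
    (fun j => star_mem (hx j)) hyk (by simpa only [star_star] using hxk)
  simp only [star_star] at hwx
  exact of_small (x := fun p : ι × κ => w p.1 p.2) (fun p => hw p.1 p.2)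
    (HasStrongSum.prod_swap (d := fun i j => star (w i j) * w i j)
      (fun _ _ => star_mul_self_nonneg _) hwx hxh)
    (HasStrongSum.prod (d := fun i j => w i j * star (w i j))
      (fun _ _ => mul_star_self_nonneg _) hwy hyl)

theorem sum {I : Type*} [Small.{u} I] {a b : I → H →L[ℂ] H} (e : ∀ i, KPEquiv M (a i) (b i))
    (ha : HasStrongSum a h) (hb : HasStrongSum b k) : KPEquiv M h k := by
  choose ι x hx hxa hxb using fun i => kpEquiv_iff.1 (e i)
  exact of_small (x := fun p : Σ i, ι i => x p.1 p.2) (fun p => hx p.1 p.2)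
    (HasStrongSum.sigma (d := fun i j => star (x i j) * x i j)
      (fun _ _ => star_mul_self_nonneg _) hxa ha)
    (HasStrongSum.sigma (d := fun i j => x i j * star (x i j))
      (fun _ _ => mul_star_self_nonneg _) hxb hb)

lemma add (e : KPEquiv M a c) (f : KPEquiv M b d) : KPEquiv M (a + b) (c + d) :=
  sum (Fin.forall_fin_two.2 ⟨e, f⟩) (hasStrongSum_pair a b) (hasStrongSum_pair c d)

theorem exists_hasStrongSum {I : Type*} {a : I → H →L[ℂ] H} (e : KPEquiv M h k)
    (ha : ∀ i, IsPosIn M (a i)) (hah : HasStrongSum a h) :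
    ∃ b : I → H →L[ℂ] H, (∀ i, KPEquiv M (a i) (b i)) ∧ HasStrongSum b k := by
  obtain ⟨κ, x, hx, hxh, hxk⟩ := kpEquiv_iff.1 e
  obtain ⟨w, hw, hwa, hwx⟩ := exists_refinement (y := fun i => CFC.sqrt (a i))
    (fun i => sqrt_mem (ha i).mem) hx (by simpa only [star_sqrt_mul_sqrt (ha _).nonneg] using hah)
    hxh
  simp only [sqrt_mul_star_sqrt (ha _).nonneg] at hwa
  have hle (i : I) (F : Finset κ) : ∑ j ∈ F, star (w i j) * w i j ≤ k := calc
    ∑ j ∈ F, star (w i j) * w i j ≤ ∑ j ∈ F, x j * star (x j) :=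
      Finset.sum_le_sum fun j _ => (hwx j).le (fun i => star_mul_self_nonneg (w i j)) i
    _ ≤ k := hxk.sum_le (fun j => mul_star_self_nonneg (x j)) F
  choose b _ hb using fun i =>
    exists_hasStrongSum_of_sum_le (fun j => star_mul_self_nonneg (w i j)) (hle i)
  exact ⟨b, fun i => (of_small (hw i) (hb i) (hwa i)).symm,
    HasStrongSum.comm (fun i j => star_mul_self_nonneg (w i j)) hb hwx hxk⟩

lemma exists_add_eq (e : KPEquiv M (a + b) k) (ha : IsPosIn M a) (hb : IsPosIn M b) :
    ∃ c d, KPEquiv M a c ∧ KPEquiv M b d ∧ c + d = k := by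
  obtain ⟨f, hf, hfk⟩ :=
    e.exists_hasStrongSum (Fin.forall_fin_two.2 ⟨ha, hb⟩) (hasStrongSum_pair a b)
  exact ⟨f 0, f 1, hf 0, hf 1, by simpa using (hasStrongSum_fintype f).unique hfk⟩

lemma mul_left_of_commute (e : KPEquiv M h k) (hc : IsPosIn M c)
    (hcomm : ∀ x ∈ M, c * x = x * c) : KPEquiv M (c * h) (c * k) := by
  obtain ⟨ι, x, hx, hxh, hxk⟩ := kpEquiv_iff.1 e
  have hs : star (CFC.sqrt c) = CFC.sqrt c := (CFC.sqrt_nonneg c).isSelfAdjoint.star_eq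
  have hss : CFC.sqrt c * CFC.sqrt c = c := CFC.sqrt_mul_sqrt_self c hc.nonneg
  have hsx (i : ι) : CFC.sqrt c * x i = x i * CFC.sqrt c :=
    (Commute.cfcₙ_nnreal (hcomm _ (hx i)) NNReal.sqrt).eq
  have hcx (i : ι) : c * star (x i) = star (x i) * c := hcomm _ (star_mem (hx i))
  have hstar_mul (i : ι) : star (CFC.sqrt c * x i) * (CFC.sqrt c * x i) =
      c * (star (x i) * x i) := by
    rw [star_mul, hs, mul_assoc, ← mul_assoc _ _ (x i), hss, ← mul_assoc, ← hcx, mul_assoc]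
  have hmul_star (i : ι) : CFC.sqrt c * x i * star (CFC.sqrt c * x i) =
      c * (x i * star (x i)) := by
    rw [hsx, star_mul, hs, mul_assoc, ← mul_assoc _ _ (star (x i)), hss, ← mul_assoc,
      ← hcomm _ (hx i), mul_assoc]
  exact of_small (fun i => mul_mem (sqrt_mem hc.mem) (hx i))
    (by simpa only [hstar_mul] using hxh.mul_left c)
    (by simpa only [hmul_star] using hxk.mul_left c)

lemma eq_zero (e : KPEquiv M 0 k) : k = 0 := by
  obtain ⟨ι, x, -, hx0, hxk⟩ := kpEquiv_iff.1 e
  have hx (i : ι) : x i = 0 := (CStarRing.star_mul_self_eq_zero_iff _).1 <|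
    le_antisymm (hx0.le (fun i => star_mul_self_nonneg (x i)) i) (star_mul_self_nonneg (x i))
  refine hxk.unique fun ξ => ?_
  simp [hx, hasSum_zero]

end KPEquiv

/-- Kadison–Pedersen subequivalence on `M₊`: `a` is equivalent to an element below `b`. -/
def KPSubEquiv (M : VonNeumannAlgebra H) (a b : H →L[ℂ] H) : Prop :=
  ∃ l, KPEquiv M a l ∧ l ≤ b

lemma KPEquiv.subEquiv (e : KPEquiv M h k) : KPSubEquiv M h k :=
  ⟨k, e, le_rfl⟩

lemma KPEquiv.subEquiv_of_le (e : KPEquiv M h k) (ha : IsPosIn M a) (hah : a ≤ h) :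
    KPSubEquiv M a k := by
  have hrest := e.isPosIn_left.sub ha hah
  rw [← add_sub_cancel a h] at e
  obtain ⟨c, d, hac, hbd, rfl⟩ := e.exists_add_eq ha hrest
  exact ⟨c, hac, le_add_of_nonneg_right hbd.isPosIn_right.nonneg⟩

theorem KPEquiv.exists_copies (e : KPEquiv M h k) (hs : IsPosIn M s) (hle : k + s ≤ h) :
    ∃ f : ℕ → H →L[ℂ] H, (∀ n, KPEquiv M s (f n)) ∧ ∃ R ≤ k, HasStrongSum f R := by
  have hk := e.isPosIn_right
  have hr : IsPosIn M (h - (k + s)) := e.isPosIn_left.sub (hk.add hs) hle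
  have hsplit (g : {g // KPEquiv M h g}) :
      ∃ (g' : {g // KPEquiv M h g}) (t : _), KPEquiv M s t ∧ t + g' ≤ g := by
    obtain ⟨g, hg⟩ := g
    rw [← add_sub_cancel (k + s) h] at hg
    obtain ⟨m, r, hm, hrr, rfl⟩ := hg.exists_add_eq (hk.add hs) hr
    obtain ⟨g', t, hg', ht, rfl⟩ := hm.exists_add_eq hk hs
    refine ⟨⟨g', e.trans hg'⟩, t, ht, ?_⟩
    rw [add_comm t]
    exact le_add_of_nonneg_right hrr.isPosIn_right.nonneg
  choose next t ht hle_next using hsplit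
  let g (n : ℕ) : {g // KPEquiv M h g} := next^[n] ⟨k, e⟩
  have hpos (n : ℕ) : 0 ≤ t (g n) := (ht _).isPosIn_right.nonneg
  have hrange (N : ℕ) : ∑ n ∈ Finset.range N, t (g n) + g N ≤ k := by
    induction N with
    | zero => simp [g]
    | succ N ih =>
      have hg : g (N + 1) = next (g N) := Function.iterate_succ_apply' next N _
      rw [Finset.sum_range_succ, add_assoc, hg]
      exact (add_le_add_right (hle_next (g N)) _).trans ih
  refine ⟨fun n => t (g n), fun n => ht _, exists_hasStrongSum_of_sum_le hpos fun F => ?_⟩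
  calc ∑ n ∈ F, t (g n) ≤ ∑ n ∈ Finset.range (F.sup id + 1), t (g n) :=
        Finset.sum_le_sum_of_subset_of_nonneg F.subset_range_sup_succ fun n _ _ => hpos n
    _ ≤ k := (le_add_of_nonneg_right (g _).2.isPosIn_right.nonneg).trans (hrange _)

theorem KPEquiv.absorb (e : KPEquiv M h k) (hs : IsPosIn M s) (hle : k + s ≤ h) :
    KPEquiv M (k + s) k := by
  obtain ⟨f, hf, R, hRk, hfR⟩ := e.exists_copies hs hle
  have hshift : KPEquiv M (s + R) R := by
    refine KPEquiv.sum (fun n => ?_) (hfR.nat_cons s) hfR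
    cases n with
    | zero => exact hf 0
    | succ n => exact (hf n).symm.trans (hf (n + 1))
  have hrest := e.isPosIn_right.sub hshift.isPosIn_right hRk
  have hadd := hshift.add (KPEquiv.refl hrest)
  rwa [add_assoc, add_sub_cancel, add_comm] at hadd

namespace KPSubEquiv

lemma of_le (ha : IsPosIn M a) (hab : a ≤ b) : KPSubEquiv M a b :=
  ⟨a, KPEquiv.refl ha, hab⟩

lemma trans : KPSubEquiv M a b → KPSubEquiv M b c → KPSubEquiv M a c := by
  rintro ⟨l, hal, hlb⟩ ⟨m, hbm, hmc⟩
  obtain ⟨n, hln, hnm⟩ := hbm.subEquiv_of_le hal.isPosIn_right hlb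
  exact ⟨n, hal.trans hln, hnm.trans hmc⟩

lemma add : KPSubEquiv M a c → KPSubEquiv M b d → KPSubEquiv M (a + b) (c + d) := by
  rintro ⟨l, hal, hlc⟩ ⟨m, hbm, hmd⟩
  exact ⟨l + m, hal.add hbm, add_le_add hlc hmd⟩

lemma sum {I : Type*} [Small.{u} I] {a b : I → H →L[ℂ] H} (hab : ∀ i, KPSubEquiv M (a i) (b i))
    (hah : HasStrongSum a h) (hbk : HasStrongSum b k) : KPSubEquiv M h k := by
  choose l hal hlb using hab
  have hl (i : I) : 0 ≤ l i := (hal i).isPosIn_right.nonneg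
  obtain ⟨m, hmk, hlm⟩ := exists_hasStrongSum_of_sum_le hl fun F =>
    (Finset.sum_le_sum fun i _ => hlb i).trans (hbk.sum_le (fun i => (hl i).trans (hlb i)) F)
  exact ⟨m, KPEquiv.sum hal hah hlm, hmk⟩

theorem antisymm : KPSubEquiv M h k → KPSubEquiv M k h → KPEquiv M h k := by
  rintro ⟨q, hhq, hqk⟩ ⟨l, hkl, hlh⟩
  obtain ⟨m, hqm, hml⟩ := hkl.subEquiv_of_le hhq.isPosIn_right hqk
  have habsorb := (hhq.trans hqm).absorb (hkl.isPosIn_right.sub hqm.isPosIn_right hml)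
    ((add_sub_cancel m l).trans_le hlh)
  rw [add_sub_cancel] at habsorb
  exact (hhq.trans hqm).trans (habsorb.symm.trans hkl.symm)

end KPSubEquiv

/-- `h ≈ h + h`, the form in which proper infiniteness enters the argument. -/
def IsSelfAbsorbing (M : VonNeumannAlgebra H) (h : H →L[ℂ] H) : Prop :=
  KPEquiv M (h + h) h

namespace IsSelfAbsorbing

lemma isPosIn (hh : IsSelfAbsorbing M h) : IsPosIn M h :=
  KPEquiv.isPosIn_right hh

lemma congr (hh : IsSelfAbsorbing M h) (e : KPEquiv M h k) : IsSelfAbsorbing M k :=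
  (e.symm.add e.symm).trans (KPEquiv.trans hh e)

lemma sum {I : Type*} [Small.{u} I] {a : I → H →L[ℂ] H} (ha : ∀ i, IsSelfAbsorbing M (a i))
    (hah : HasStrongSum a h) : IsSelfAbsorbing M h :=
  KPEquiv.sum ha (hah.add hah) hah

lemma mul_left_of_commute (hh : IsSelfAbsorbing M h) (hc : IsPosIn M c)
    (hcomm : ∀ x ∈ M, c * x = x * c) : IsSelfAbsorbing M (c * h) := by
  simpa only [IsSelfAbsorbing, mul_add] using KPEquiv.mul_left_of_commute hh hc hcomm

lemma of_copies {f : ℕ → H →L[ℂ] H} (hf : ∀ n, KPEquiv M s (f n)) (hfh : HasStrongSum f h) :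
    IsSelfAbsorbing M h := by
  refine KPEquiv.sum (fun n => ?_)
    ((hfh.sum_elim hfh).comp_equiv Equiv.natSumNatEquivNat.symm) hfh
  have hcopy (i : ℕ ⊕ ℕ) : KPEquiv M s (Sum.elim f f i) := i.rec hf hf
  exact (hcopy _).symm.trans (hf n)

lemma exists_copies (hh : IsSelfAbsorbing M h) :
    ∃ f : ℕ → H →L[ℂ] H, (∀ n, KPEquiv M h (f n)) ∧ ∃ R ≤ h, HasStrongSum f R :=
  KPEquiv.exists_copies hh hh.isPosIn le_rfl

lemma nsmul_equiv (hh : IsSelfAbsorbing M h) (n : ℕ) : KPEquiv M ((n + 1) • h) h := by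
  induction n with
  | zero => simpa using KPEquiv.refl hh.isPosIn
  | succ n ih =>
    rw [succ_nsmul]
    exact (ih.add (KPEquiv.refl hh.isPosIn)).trans hh

end IsSelfAbsorbing

end KadisonPedersenEquivalence

section MaximalFamilies

lemma exists_maximal_sum_le {ι A : Type*} [AddCommMonoid A] [Preorder A] (a b : ι → A) {h k : A}
    (hh : 0 ≤ h) (hk : 0 ≤ k) : ∃ S : Set ι, Maximal (fun T : Set ι => ∀ F : Finset ι, ↑F ⊆ T →
      ∑ i ∈ F, a i ≤ h ∧ ∑ i ∈ F, b i ≤ k) S := by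
  have hfinite : Order.IsOfFiniteCharacter {T : Set ι | ∀ F : Finset ι, ↑F ⊆ T →
      ∑ i ∈ F, a i ≤ h ∧ ∑ i ∈ F, b i ≤ k} := fun T =>
    ⟨fun hT U hU _ F hF => hT F (hF.trans hU), fun hT F hF => hT F hF F.finite_toSet F subset_rfl⟩
  obtain ⟨S, -, hS⟩ := hfinite.exists_maximal (x := ∅) fun F hF => by
    rw [Finset.coe_eq_empty.1 (Set.subset_empty_iff.1 hF)]
    exact ⟨hh, hk⟩
  exact ⟨S, hS⟩

variable {ι : Type*} {a : ι → H →L[ℂ] H} {h k : H →L[ℂ] H} {S : Set ι}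

namespace HasStrongSum

lemma sum_le_of_subset (ha : HasStrongSum (fun i : S => a i) h) (hpos : ∀ i, 0 ≤ a i)
    {F : Finset ι} (hF : ↑F ⊆ S) : ∑ i ∈ F, a i ≤ h := by
  classical
  rw [← Finset.sum_subtype_of_mem a hF]
  exact ha.sum_le (fun i => hpos i) _

lemma sum_le_of_subset_insert (ha : HasStrongSum (fun i : S => a i) h) (hpos : ∀ i, 0 ≤ a i)
    {j : ι} (hj : a j ≤ k - h) {F : Finset ι} (hF : ↑F ⊆ insert j S) : ∑ i ∈ F, a i ≤ k := by
  classical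
  have hFj : ↑(F.erase j) ⊆ S := fun i hi => by
    obtain ⟨hij, hiF⟩ := Finset.mem_erase.1 hi
    exact (hF hiF).resolve_left hij
  calc ∑ i ∈ F, a i ≤ ∑ i ∈ insert j (F.erase j), a i :=
        Finset.sum_le_sum_of_subset_of_nonneg (Finset.insert_erase_subset j F) fun i _ _ => hpos i
    _ = a j + ∑ i ∈ F.erase j, a i := Finset.sum_insert (Finset.notMem_erase j F)
    _ ≤ k - h + h := add_le_add hj (ha.sum_le_of_subset hpos hFj)
    _ = k := sub_add_cancel k h

end HasStrongSum

/-- The index in `ℕ` lets a member be repeated: an `x` that still fits into the remainders occurs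
infinitely often in a maximal family, which forces `f x = 0`. -/
theorem exists_maximal_family {X : Type*} {f g : X → H →L[ℂ] H} (hf : ∀ x, 0 ≤ f x)
    (hg : ∀ x, 0 ≤ g x) (hh : 0 ≤ h) (hk : 0 ≤ k) :
    ∃ S : Set (X × ℕ), ∃ h' ≤ h, ∃ k' ≤ k, HasStrongSum (fun p : S => f p.1.1) h' ∧
      HasStrongSum (fun p : S => g p.1.1) k' ∧
      ∀ x, f x ≤ h - h' → g x ≤ k - k' → f x = 0 := by
  obtain ⟨S, hS⟩ := exists_maximal_sum_le (fun p : X × ℕ => f p.1) (fun p => g p.1)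
    hh hk
  have hS' (F : Finset S) : ∑ p ∈ F, f p.1.1 ≤ h ∧ ∑ p ∈ F, g p.1.1 ≤ k := by
    have hF := hS.prop (F.map (.subtype (· ∈ S))) fun p hp =>
      Finset.property_of_mem_map_subtype F hp
    simpa only [Finset.sum_map, Function.Embedding.subtype_apply] using hF
  obtain ⟨h', hh', hfh⟩ := exists_hasStrongSum_of_sum_le (a := fun p : S => f p.1.1)
    (fun p => hf p.1.1) fun F => (hS' F).1
  obtain ⟨k', hk', hgk⟩ := exists_hasStrongSum_of_sum_le (a := fun p : S => g p.1.1)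
    (fun p => hg p.1.1) fun F => (hS' F).2
  refine ⟨S, h', hh', k', hk', hfh, hgk, fun x hfx hgx => ?_⟩
  have hmem (n : ℕ) : (x, n) ∈ S := hS.mem_of_prop_insert fun F hF => by
    have hfF : ∑ p ∈ F, f p.1 ≤ h := hfh.sum_le_of_subset_insert (a := fun p : X × ℕ => f p.1)
      (fun p => hf p.1) hfx hF
    have hgF : ∑ p ∈ F, g p.1 ≤ k := hgk.sum_le_of_subset_insert (a := fun p : X × ℕ => g p.1)
      (fun p => hg p.1) hgx hF
    exact ⟨hfF, hgF⟩
  have hinj : Function.Injective fun n => (⟨(x, n), hmem n⟩ : S) := fun m n hmn => by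
    simpa using hmn
  refine ContinuousLinearMap.ext fun ξ => ?_
  have hconst : Summable fun _ : ℕ => f x ξ :=
    ((hfh ξ).summable.comp_injective hinj :)
  exact (summable_const_iff (f x ξ)).1 hconst

end MaximalFamilies

section CentralProjections

variable {M : VonNeumannAlgebra H} {a b h k z : H →L[ℂ] H}

namespace IsCentralProj

lemma isPosIn (hz : IsCentralProj M z) : IsPosIn M z := by
  obtain ⟨⟨hzM, hsa, hidem⟩, -⟩ := hz
  exact ⟨hzM, IsStarProjection.nonneg ⟨hidem, hsa⟩⟩

lemma compl (hz : IsCentralProj M z) : IsCentralProj M (1 - z) := by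
  obtain ⟨⟨hzM, hsa, hidem⟩, hcomm⟩ := hz
  have hcompl : IsStarProjection (1 - z) := IsStarProjection.one_sub ⟨hidem, hsa⟩
  refine ⟨⟨sub_mem (one_mem M) hzM, hcompl.isSelfAdjoint, hcompl.isIdempotentElem⟩, fun x hx => ?_⟩
  rw [sub_mul, mul_sub, hcomm x hx, one_mul, mul_one]

lemma mul_isPosIn (hz : IsCentralProj M z) (hh : IsPosIn M h) : IsPosIn M (z * h) :=
  (KPEquiv.mul_left_of_commute (KPEquiv.refl hh) hz.isPosIn hz.2).isPosIn_left

lemma mul_le (hz : IsCentralProj M z) (hh : IsPosIn M h) : z * h ≤ h := by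
  simpa [sub_mul] using (hz.compl.mul_isPosIn hh).nonneg

lemma mul_le_mul (hz : IsCentralProj M z) (ha : IsPosIn M a) (hb : IsPosIn M b) (hab : a ≤ b) :
    z * a ≤ z * b := by
  simpa [mul_sub] using (hz.mul_isPosIn (hb.sub ha hab)).nonneg

lemma equiv (hz : IsCentralProj M z) (e : KPEquiv M h k) : KPEquiv M (z * h) (z * k) :=
  e.mul_left_of_commute hz.isPosIn hz.2

end IsCentralProj

lemma isCentralProj_starProjection {K : Submodule ℂ H} [K.HasOrthogonalProjection]
    (hM : ∀ x ∈ M, ∀ η ∈ K, x η ∈ K) (hM' : ∀ T ∈ M.commutant, ∀ η ∈ K, T η ∈ K) :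
    IsCentralProj M K.starProjection := by
  have hproj : IsStarProjection K.starProjection := isStarProjection_starProjection
  have hmem : K.starProjection ∈ M := by
    rw [VonNeumannAlgebra.IsStarProjection.mem_iff hproj, Submodule.range_starProjection]
    exact hM'
  have hmem' : K.starProjection ∈ M.commutant := by
    rw [VonNeumannAlgebra.IsStarProjection.mem_iff hproj, Submodule.range_starProjection,
      M.commutant_commutant]
    exact hM
  exact ⟨⟨hmem, hproj.isSelfAdjoint, hproj.isIdempotentElem⟩, fun x hx =>
    mem_iff_forall_commutant.1 hx _ hmem'⟩

theorem exists_isCentralProj_of_mul_mul_eq_zero (hb : b ∈ M) (hba : ∀ y ∈ M, b * y * a = 0) :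
    ∃ z, IsCentralProj M z ∧ z * a = a ∧ b * z = 0 := by
  let K : Submodule ℂ H := ⨅ y : M, (b * (y : H →L[ℂ] H)).ker
  have mem_K {η : H} : η ∈ K ↔ ∀ y ∈ M, b (y η) = 0 := by simp [K]
  have hK : IsClosed (K : Set H) := by
    rw [Submodule.coe_iInf]
    exact isClosed_iInter fun y => (b * (y : H →L[ℂ] H)).isClosed_ker
  have : CompleteSpace K := hK.completeSpace_coe
  refine ⟨K.starProjection, isCentralProj_starProjection (fun x hx η hη => ?_)
    (fun T hT η hη => ?_), ContinuousLinearMap.ext fun ξ => ?_, ContinuousLinearMap.ext fun ξ => ?_⟩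
  · exact mem_K.2 fun y hy => mem_K.1 hη (y * x) (mul_mem hy hx)
  · refine mem_K.2 fun y hy => ?_
    have hcomm := DFunLike.congr_fun (mem_iff_forall_commutant.1 (mul_mem hb hy) T hT) η
    exact hcomm.symm.trans ((congrArg T (mem_K.1 hη y hy)).trans T.map_zero)
  · exact Submodule.starProjection_eq_self_iff.2
      (mem_K.2 fun y hy => DFunLike.congr_fun (hba y hy) ξ)
  · exact mem_K.1 (K.starProjection_apply_mem ξ) 1 (one_mem M)

end CentralProjections

section Comparison

variable {M : VonNeumannAlgebra H} {a b y : H →L[ℂ] H}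

lemma mul_mul_eq_zero_of_forall_le (ha : IsPosIn M a) (hb : IsPosIn M b)
    (hab : ∀ x ∈ M, star x * x ≤ a → x * star x ≤ b → x = 0) (hy : y ∈ M) : b * y * a = 0 := by
  have hx : b * y * a ∈ M := mul_mem (mul_mem hb.mem hy) ha.mem
  have hleft := star_mul_self_mul_le ha.nonneg (b * y)
  have hright := star_mul_self_mul_le hb.nonneg (a * star y)
  have hstar : a * star y * b = star (b * y * a) := by
    simp [ha.nonneg.isSelfAdjoint.star_eq, hb.nonneg.isSelfAdjoint.star_eq, mul_assoc]
  rw [hstar, star_star] at hright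
  obtain ⟨c, hc, hca, hcb⟩ :=
    exists_smul_star_mul_self_le ha.nonneg hb.nonneg hleft hright
  have hcx : c • (b * y * a) ∈ M := M.toStarSubalgebra.smul_mem hx (c : ℂ)
  exact (smul_eq_zero.1 (hab _ hcx hca hcb)).resolve_left hc

theorem exists_isCentralProj_kpSubEquiv (ha : IsPosIn M a) (hb : IsPosIn M b) :
    ∃ z, IsCentralProj M z ∧ KPSubEquiv M (z * b) (z * a) ∧
      KPSubEquiv M ((1 - z) * a) ((1 - z) * b) := by
  obtain ⟨S, a', ha'a, b', hb'b, hsa, hsb, hmax⟩ := exists_maximal_family (X := M)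
    (f := fun x => star x.1 * x.1) (g := fun x => x.1 * star x.1)
    (fun x => star_mul_self_nonneg x.1) (fun x => mul_star_self_nonneg x.1) ha.nonneg hb.nonneg
  have e : KPEquiv M a' b' := KPEquiv.of_small (fun p : S => p.1.1.2) hsa hsb
  have ha' := ha.sub e.isPosIn_left ha'a
  have hb' := hb.sub e.isPosIn_right hb'b
  obtain ⟨z, hz, hza, hbz⟩ := exists_isCentralProj_of_mul_mul_eq_zero hb'.mem fun y hy =>
    mul_mul_eq_zero_of_forall_le ha' hb' (fun x hx hxa hxb =>
      (CStarRing.star_mul_self_eq_zero_iff x).1 (hmax ⟨x, hx⟩ hxa hxb)) hy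
  have hzb : z * b = z * b' := by
    rw [← sub_eq_zero, ← mul_sub, hz.2 _ hb'.mem, hbz]
  have hza : (1 - z) * a = (1 - z) * a' := by
    rw [← sub_eq_zero, ← mul_sub, sub_mul, one_mul, hza, sub_self]
  refine ⟨z, hz, hzb ▸ ⟨z * a', hz.equiv e.symm, ?_⟩, hza ▸ ⟨(1 - z) * b', hz.compl.equiv e, ?_⟩⟩
  · exact hz.mul_le_mul e.isPosIn_left ha ha'a
  · exact hz.compl.mul_le_mul e.isPosIn_right hb hb'b

end Comparison

section ProperlyInfinite

variable {M : VonNeumannAlgebra H} {h : H →L[ℂ] H}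

lemma kpFinite_of_forall_isSelfAbsorbing (hh : IsPosIn M h)
    (hzero : ∀ k, IsSelfAbsorbing M k → k ≤ h → k = 0) : KPFinite M h := by
  intro k _ _ hkh e
  have hs : IsPosIn M (h - k) := hh.sub e.isPosIn_right hkh
  obtain ⟨f, hf, R, hRk, hfR⟩ := e.exists_copies hs (add_sub_cancel k h).le
  obtain rfl : R = 0 := hzero R (.of_copies hf hfR) (hRk.trans hkh)
  have hf₀ : f 0 = 0 := le_antisymm (hfR.le (fun n => (hf n).isPosIn_right.nonneg) 0)
    (hf 0).isPosIn_right.nonneg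
  have e₀ : KPEquiv M (f 0) (h - k) := (hf 0).symm
  rw [hf₀] at e₀
  exact (sub_eq_zero.1 e₀.eq_zero).symm

lemma exists_maximal_isSelfAbsorbing (hh : IsPosIn M h) : ∃ k ≤ h, IsSelfAbsorbing M k ∧
    ∀ l, IsSelfAbsorbing M l → l ≤ h - k → l = 0 := by
  obtain ⟨S, k, hkh, k', -, hk, hk', hmax⟩ := exists_maximal_family
    (X := {l // IsSelfAbsorbing M l}) (f := Subtype.val) (g := Subtype.val)
    (fun l => l.2.isPosIn.nonneg) (fun l => l.2.isPosIn.nonneg) hh.nonneg hh.nonneg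
  obtain rfl := hk.unique hk'
  exact ⟨k, hkh, .sum (fun p : S => p.1.1.2) hk, fun l hl hls => hmax ⟨l, hl⟩ hls hls⟩

theorem KPProperlyInfinite.isSelfAbsorbing (hinf : KPProperlyInfinite M h) (hh : IsPosIn M h) :
    IsSelfAbsorbing M h := by
  obtain ⟨k, hkh, hk, hmax⟩ := exists_maximal_isSelfAbsorbing hh
  have hs : IsPosIn M (h - k) := hh.sub hk.isPosIn hkh
  obtain ⟨z, hz, hsk, l, hkl, hls⟩ := exists_isCentralProj_kpSubEquiv hk.isPosIn hs
  have hmaxz (m : H →L[ℂ] H) (hm : IsSelfAbsorbing M m) (hle : m ≤ (1 - z) * (h - k)) : m = 0 :=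
    hmax m hm (hle.trans (hz.compl.mul_le hs))
  have hk₀ : (1 - z) * k = 0 := by
    have hl : IsSelfAbsorbing M l :=
      (hk.mul_left_of_commute hz.compl.isPosIn hz.compl.2).congr hkl
    obtain rfl := hmaxz l hl hls
    exact hkl.symm.eq_zero
  have hh₀ : (1 - z) * h = 0 := by
    refine hinf.2 _ hz.compl ?_
    refine kpFinite_of_forall_isSelfAbsorbing (hz.compl.mul_isPosIn hh) fun m hm hle => ?_
    exact hmaxz m hm (by rwa [mul_sub, hk₀, sub_zero])
  have hzk : z * k = k := by simpa [sub_mul, sub_eq_zero, eq_comm] using hk₀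
  have hzh : z * h = h := by simpa [sub_mul, sub_eq_zero, eq_comm] using hh₀
  rw [mul_sub, hzk, hzh] at hsk
  have hkk : KPSubEquiv M (k + k) k := KPEquiv.subEquiv hk
  have hhk : KPSubEquiv M h k := by
    simpa using (hsk.add (.of_le hk.isPosIn le_rfl)).trans hkk
  exact KPSubEquiv.antisymm ((hhk.add hhk).trans (hkk.trans (.of_le hk.isPosIn hkh)))
    (.of_le hh (le_add_of_nonneg_right hh.nonneg))

end ProperlyInfinite

section RangeProjection

variable {M : VonNeumannAlgebra H} {h : H →L[ℂ] H}

theorem exists_isProjIn_hasStrongSum (hh : IsPosIn M h) (hh₁ : h ≤ 1) :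
    ∃ p, IsProjIn M p ∧ HasStrongSum (fun n : ℕ => h * (1 - h) ^ n) p := by
  have hpos (n : ℕ) := mul_one_sub_pow_nonneg hh.nonneg hh₁ n
  obtain ⟨p, -, hp⟩ :=
    exists_hasStrongSum_of_sum_le hpos (sum_mul_one_sub_pow_le_one hh.nonneg hh₁)
  have hcomm (n : ℕ) : Commute h ((1 - h) ^ n) :=
    ((Commute.one_right h).sub_right (.refl h)).pow_right n
  have hmul : h * p = h := by
    have hshift : HasStrongSum (fun n : ℕ => h * (1 - h) ^ n) (h + (1 - h) * p) := by
      convert (hp.mul_left (1 - h)).nat_cons h using 2 with n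
      cases n with
      | zero => simp
      | succ n =>
        change h * (1 - h) ^ (n + 1) = (1 - h) * (h * (1 - h) ^ n)
        rw [(hcomm _).eq, (hcomm _).eq, pow_succ', mul_assoc]
    calc h * p = p - (1 - h) * p := by rw [sub_mul, one_mul, sub_sub_cancel]
      _ = h := sub_eq_of_eq_add (hp.unique hshift)
  have hidem : p * p = p := by
    refine (hp.mul_right p).unique ?_
    simpa only [(hcomm _).eq, mul_assoc, hmul] using hp
  refine ⟨p, ⟨hp.mem fun n => ?_, (hp.nonneg hpos).isSelfAdjoint, hidem⟩, hp⟩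
  exact mul_mem hh.mem (pow_mem (sub_mem (one_mem M) hh.mem) n)

namespace IsSelfAbsorbing

lemma exists_isProjIn_equiv_of_le_one (hh : IsSelfAbsorbing M h) (hh₁ : h ≤ 1) :
    ∃ p, IsProjIn M p ∧ KPEquiv M h p := by
  have hpos := hh.isPosIn.nonneg
  obtain ⟨p, hp, hsum⟩ := exists_isProjIn_hasStrongSum hh.isPosIn hh₁
  obtain ⟨f, hf, R, hRh, hfR⟩ := hh.exists_copies
  have hterm (n : ℕ) : IsPosIn M (h * (1 - h) ^ n) :=
    ⟨mul_mem hh.isPosIn.mem (pow_mem (sub_mem (one_mem M) hh.isPosIn.mem) n),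
      mul_one_sub_pow_nonneg hpos hh₁ n⟩
  have hhp : KPSubEquiv M h p :=
    .of_le hh.isPosIn (by simpa using hsum.le (fun n => (hterm n).nonneg) 0)
  have hpR : KPSubEquiv M p R := KPSubEquiv.sum
    (fun n => (hf n).subEquiv_of_le (hterm n) (mul_one_sub_pow_le hpos hh₁ n)) hsum hfR
  have hR : IsPosIn M R := (IsSelfAbsorbing.of_copies hf hfR).isPosIn
  exact ⟨p, hp, hhp.antisymm (hpR.trans (.of_le hR hRh))⟩

lemma exists_equiv_le_one (hh : IsSelfAbsorbing M h) :
    ∃ k ≤ 1, IsSelfAbsorbing M k ∧ KPEquiv M h k := by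
  obtain ⟨n, hn⟩ := exists_nat_ge ‖h‖
  have hn₀ : (0 : ℝ) < n + 1 := by positivity
  have hc : IsPosIn M ((n + 1 : ℝ)⁻¹ • 1) :=
    ⟨M.toStarSubalgebra.smul_mem (one_mem M) ((n + 1 : ℝ)⁻¹ : ℝ),
      smul_nonneg (inv_nonneg.2 hn₀.le) zero_le_one⟩
  have hcomm : ∀ x ∈ M, ((n + 1 : ℝ)⁻¹ • 1 : H →L[ℂ] H) * x = x * (n + 1 : ℝ)⁻¹ • 1 :=
    fun x _ => by rw [smul_one_mul, mul_smul_one]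
  have hscale : ((n + 1 : ℝ)⁻¹ • 1) * ((n + 1) • h) = h := by
    rw [smul_one_mul, ← Nat.cast_smul_eq_nsmul ℝ, Nat.cast_succ, inv_smul_smul₀ hn₀.ne']
  refine ⟨((n + 1 : ℝ)⁻¹ • 1) * h, ?_, hh.mul_left_of_commute hc hcomm, ?_⟩
  · rw [smul_one_mul]
    exact inv_smul_le_one_of_norm_le hh.isPosIn.nonneg.isSelfAdjoint hn₀ (by linarith)
  · simpa only [hscale] using (hh.nsmul_equiv n).mul_left_of_commute hc hcomm

theorem exists_isProjIn_equiv (hh : IsSelfAbsorbing M h) :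
    ∃ p, IsProjIn M p ∧ KPEquiv M h p := by
  obtain ⟨k, hk₁, hk, hhk⟩ := hh.exists_equiv_le_one
  obtain ⟨p, hp, hkp⟩ := hk.exists_isProjIn_equiv_of_le_one hk₁
  exact ⟨p, hp, hhk.trans hkp⟩

end IsSelfAbsorbing

end RangeProjection

/-- Every properly infinite positive element `h` of a von Neumann algebra
`M` is Kadison–Pedersen equivalent to a projection: there is `p ∈ P(M)` with `h ≈ p`. -/
theorem kp_properlyInfinite_equiv_proj (M : VonNeumannAlgebra H) (h : H →L[ℂ] H)
    (hh : h ∈ M) (hpos : h.IsPositive) (hinf : KPProperlyInfinite M h) :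
    ∃ p, IsProjIn M p ∧ KPEquiv M h p := by
  have hhM : IsPosIn M h := ⟨hh, (nonneg_iff_isPositive h).2 hpos⟩
  exact (hinf.isSelfAbsorbing hhM).exists_isProjIn_equiv
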